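/- Let τ be a symmetric 2×2 complex matrix with positive definite imaginary part, z ∈ ℂ², and write θ̂[ε](z) := θ[ε](z|2τ). Then θ[11;00](0|τ)·θ[11;00](z|τ) = 2·θ̂[11;00](z)·θ̂[00;00](z) + 2·θ̂[10;00](z)·θ̂[01;00](z), and θ[11;11](0|τ)·θ[11;11](z|τ) = 2·θ̂[11;00](z)·θ̂[00;00](z) − 2·θ̂[10;00](z)·θ̂[01;00](z). -/

import Mathlib

/-- Genus-2 Riemann theta function with characteristic `[a b; c d]`
(`(a,b) = ε'`, `(c,d) = ε''`), evaluated at `z = (z1, z2)` and period matrix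
`τ = ((t11, t12), (t12, t22))`. -/
noncomputable def theta2 (a b c d : ℝ) (z1 z2 t11 t12 t22 : ℂ) : ℂ :=
  ∑' m : ℤ × ℤ,
    Complex.exp
      ((Real.pi : ℂ) * Complex.I *
          (((m.1 : ℂ) + (a : ℂ) / 2) *
              (((m.1 : ℂ) + (a : ℂ) / 2) * t11 + ((m.2 : ℂ) + (b : ℂ) / 2) * t12) +
            ((m.2 : ℂ) + (b : ℂ) / 2) *
              (((m.1 : ℂ) + (a : ℂ) / 2) * t12 + ((m.2 : ℂ) + (b : ℂ) / 2) * t22)) +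
        2 * (Real.pi : ℂ) * Complex.I *
          (((m.1 : ℂ) + (a : ℂ) / 2) * (z1 + (c : ℂ) / 2) +
            ((m.2 : ℂ) + (b : ℂ) / 2) * (z2 + (d : ℂ) / 2)))

/-- The symmetric matrix `τ = ((t11, t12), (t12, t22))` has positive definite
imaginary part. -/
def posDefIm (t11 t12 t22 : ℂ) : Prop :=
  (!![t11.im, t12.im; t12.im, t22.im]).PosDef

noncomputable def tterm (a b c d : ℝ) (z1 z2 t11 t12 t22 : ℂ) (m : ℤ × ℤ) : ℂ :=
    Complex.exp
      ((Real.pi : ℂ) * Complex.I *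
          (((m.1 : ℂ) + (a : ℂ) / 2) *
              (((m.1 : ℂ) + (a : ℂ) / 2) * t11 + ((m.2 : ℂ) + (b : ℂ) / 2) * t12) +
            ((m.2 : ℂ) + (b : ℂ) / 2) *
              (((m.1 : ℂ) + (a : ℂ) / 2) * t12 + ((m.2 : ℂ) + (b : ℂ) / 2) * t22)) +
        2 * (Real.pi : ℂ) * Complex.I *
          (((m.1 : ℂ) + (a : ℂ) / 2) * (z1 + (c : ℂ) / 2) +
            ((m.2 : ℂ) + (b : ℂ) / 2) * (z2 + (d : ℂ) / 2)))

lemma theta2_eq (a b c d : ℝ) (z1 z2 t11 t12 t22 : ℂ) :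
    theta2 a b c d z1 z2 t11 t12 t22 = ∑' m, tterm a b c d z1 z2 t11 t12 t22 m := rfl

lemma quad_bound (p q r : ℝ) (hp : 0 < p) (hr : 0 < r) (hd : 0 < p * r - q * q) :
    ∃ δ > 0, ∀ x y : ℝ, δ * (x ^ 2 + y ^ 2) ≤ p * x ^ 2 + 2 * q * x * y + r * y ^ 2 := by
  refine ⟨(p * r - q * q) / (p + r), by positivity, fun x y => ?_⟩
  rw [div_mul_eq_mul_div, div_le_iff₀ (by positivity)]
  nlinarith [sq_nonneg (p * x + q * y), sq_nonneg (q * x + r * y)]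

lemma posDefIm_bound {t11 t12 t22 : ℂ} (h : posDefIm t11 t12 t22) :
    ∃ δ > 0, ∀ x y : ℝ, δ * (x ^ 2 + y ^ 2) ≤
      t11.im * x ^ 2 + 2 * t12.im * x * y + t22.im * y ^ 2 := by
  unfold posDefIm at h
  have h1 := h.diag_pos (i := 0)
  have h2 := h.diag_pos (i := 1)
  have h3 := h.det_pos
  simp [Matrix.det_fin_two] at h1 h2 h3
  exact quad_bound _ _ _ h1 h2 (by linarith)

lemma tterm_summable {t11 t12 t22 : ℂ} {δ : ℝ} (hδ : 0 < δ)
    (h : ∀ x y : ℝ, δ * (x ^ 2 + y ^ 2) ≤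
      t11.im * x ^ 2 + 2 * t12.im * x * y + t22.im * y ^ 2) (a b c d : ℝ) (z1 z2 : ℂ) :
    Summable fun m => ‖tterm a b c d z1 z2 t11 t12 t22 m‖ := by
  have hT : 0 < (Complex.I * δ : ℂ).im := by simpa
  let w1 : ℂ := Complex.I * ((z1.im + (a * t11.im + b * t12.im) / 2 : ℝ) : ℂ)
  let w2 : ℂ := Complex.I * ((z2.im + (a * t12.im + b * t22.im) / 2 : ℝ) : ℂ)
  have s1 := ((summable_jacobiTheta₂_term_iff w1 (Complex.I * δ)).2 hT).norm
  have s2 := ((summable_jacobiTheta₂_term_iff w2 (Complex.I * δ)).2 hT).norm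
  have s := (s1.mul_of_nonneg s2 (fun _ => norm_nonneg _) (fun _ => norm_nonneg _)).mul_left
    (Real.exp (-Real.pi * ((a^2*t11.im + 2*a*b*t12.im + b^2*t22.im)/4 + a * z1.im + b * z2.im)))
  refine Summable.of_nonneg_of_le (fun _ => norm_nonneg _) (fun m => ?_) s
  simp only [norm_jacobiTheta₂_term, ← Real.exp_add, tterm, Complex.norm_exp]
  apply Real.exp_le_exp.2
  have := mul_le_mul_of_nonneg_left (h m.1 m.2) Real.pi_pos.le
  simp [w1, w2]
  linarith

def dupMap (x : (Fin 2 × Fin 2) × ((ℤ × ℤ) × (ℤ × ℤ))) : (ℤ × ℤ) × (ℤ × ℤ) :=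
  ((x.2.1.1 - x.2.2.1 + (x.1.1.val : ℤ) - 1, x.2.1.2 - x.2.2.2 + (x.1.2.val : ℤ) - 1),
   (x.2.1.1 + x.2.2.1, x.2.1.2 + x.2.2.2))

lemma dupMap_bij : Function.Bijective dupMap := by
  constructor
  · rintro ⟨⟨a, b⟩, ⟨k1, k2⟩, ⟨l1, l2⟩⟩ ⟨⟨a', b'⟩, ⟨k1', k2'⟩, ⟨l1', l2'⟩⟩ h
    simp only [dupMap, Prod.mk.injEq] at h
    simp only [Prod.mk.injEq, Fin.ext_iff]
    omega
  · rintro ⟨⟨m1, m2⟩, ⟨n1, n2⟩⟩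
    refine ⟨((⟨((n1 + m1 + 1) % 2).toNat, by omega⟩, ⟨((n2 + m2 + 1) % 2).toNat, by omega⟩),
      (((n1 + m1 + 1) / 2, (n2 + m2 + 1) / 2), (n1 - (n1 + m1 + 1) / 2, n2 - (n2 + m2 + 1) / 2))), ?_⟩
    simp only [dupMap, Prod.mk.injEq]
    omega

lemma tterm_dup (t11 t12 t22 z1 z2 : ℂ) (s : ℤ) (al : Fin 2 × Fin 2) (k l : ℤ × ℤ) :
    tterm 1 1 s s 0 0 t11 t12 t22 (dupMap (al, k, l)).1 *
      tterm 1 1 s s z1 z2 t11 t12 t22 (dupMap (al, k, l)).2 =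
    Complex.exp (Real.pi * Complex.I * s * ((al.1.val : ℂ) + al.2.val)) *
     (tterm al.1.val al.2.val 0 0 z1 z2 (2*t11) (2*t12) (2*t22) k *
      tterm (1 - al.1.val) (1 - al.2.val) 0 0 z1 z2 (2*t11) (2*t12) (2*t22) l) := by
  simp only [tterm, ← Complex.exp_add, dupMap]
  rw [Complex.exp_eq_exp_iff_exists_int]
  refine ⟨s * (k.1 + k.2), ?_⟩
  push_cast
  ring

lemma dup_general (t11 t12 t22 : ℂ) (hτ : posDefIm t11 t12 t22) (z1 z2 : ℂ) (s : ℤ) :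
    theta2 1 1 s s 0 0 t11 t12 t22 * theta2 1 1 s s z1 z2 t11 t12 t22 =
    ∑ al : Fin 2 × Fin 2,
    Complex.exp (Real.pi * Complex.I * s * ((al.1.val : ℂ) + al.2.val)) *
     (theta2 al.1.val al.2.val 0 0 z1 z2 (2*t11) (2*t12) (2*t22) *
      theta2 (1 - al.1.val) (1 - al.2.val) 0 0 z1 z2 (2*t11) (2*t12) (2*t22)) := by
  obtain ⟨δ, hδ, h⟩ := posDefIm_bound hτ
  have h2 : ∀ x y : ℝ, (2 * δ) * (x ^ 2 + y ^ 2) ≤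
      (2*t11).im * x ^ 2 + 2 * (2*t12).im * x * y + (2*t22).im * y ^ 2 := by
    intro x y
    have := h x y
    simp
    linarith
  have hδ2 : 0 < 2 * δ := by positivity
  simp only [theta2_eq]
  have sA := tterm_summable hδ h 1 1 s s 0 0
  have sB := tterm_summable hδ h 1 1 s s z1 z2
  have sAB := (summable_mul_of_summable_norm sA sB)
  rw [tsum_mul_tsum_of_summable_norm sA sB]
  let e := Equiv.ofBijective dupMap dupMap_bij
  rw [← e.tsum_eq]
  have sE := e.summable_iff.2 sAB
  have key := sE.tsum_prod
  simp only [Function.comp_def] at key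
  rw [key, tsum_fintype]
  refine Finset.sum_congr rfl fun al _ => ?_
  rw [tsum_mul_tsum_of_summable_norm (tterm_summable hδ2 h2 _ _ 0 0 z1 z2)
    (tterm_summable hδ2 h2 _ _ 0 0 z1 z2), ← tsum_mul_left]
  exact tsum_congr fun x => tterm_dup t11 t12 t22 z1 z2 s al x.1 x.2

/-- **Duplication (addition) theorem for second-order theta functions, cases
`[11;00]` and `[11;11]`.** With `θ̂[ε](z) = θ[ε](z|2τ)`:
`θ[11;00](0)·θ[11;00](z) = 2θ̂[11;00](z)θ̂[00;00](z) + 2θ̂[10;00](z)θ̂[01;00](z)` and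
`θ[11;11](0)·θ[11;11](z) = 2θ̂[11;00](z)θ̂[00;00](z) − 2θ̂[10;00](z)θ̂[01;00](z)`. -/
theorem theta_duplication_offdiagonal (t11 t12 t22 : ℂ) (hτ : posDefIm t11 t12 t22)
    (z1 z2 : ℂ) :
    theta2 1 1 0 0 0 0 t11 t12 t22 * theta2 1 1 0 0 z1 z2 t11 t12 t22 =
        2 * theta2 1 1 0 0 z1 z2 (2*t11) (2*t12) (2*t22)
            * theta2 0 0 0 0 z1 z2 (2*t11) (2*t12) (2*t22)
          + 2 * theta2 1 0 0 0 z1 z2 (2*t11) (2*t12) (2*t22)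
            * theta2 0 1 0 0 z1 z2 (2*t11) (2*t12) (2*t22) ∧
      theta2 1 1 1 1 0 0 t11 t12 t22 * theta2 1 1 1 1 z1 z2 t11 t12 t22 =
        2 * theta2 1 1 0 0 z1 z2 (2*t11) (2*t12) (2*t22)
            * theta2 0 0 0 0 z1 z2 (2*t11) (2*t12) (2*t22)
          - 2 * theta2 1 0 0 0 z1 z2 (2*t11) (2*t12) (2*t22)
            * theta2 0 1 0 0 z1 z2 (2*t11) (2*t12) (2*t22) := by
  have e2 : Complex.exp (Real.pi * Complex.I * (1 + 1)) = 1 := by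
    refine Eq.trans ?_ Complex.exp_two_pi_mul_I
    congr 1; ring
  constructor
  · have h := dup_general t11 t12 t22 hτ z1 z2 0
    simp [Fintype.sum_prod_type] at h
    rw [h]; ring
  · have h := dup_general t11 t12 t22 hτ z1 z2 1
    simp [Fintype.sum_prod_type, e2] at h
    rw [h]; ring
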